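/- arXiv:2310.11452 — 4 statements merged into one kernel-verified Lean document; each statement's English description precedes it below -/
import Mathlib

section
/- Let r ≥ 3 and n ≥ 32. If G is an n-vertex K_{r+1}-free graph that is not traceable, then e(G) ≤ e(T_r(n-1)), and equality holds if G is the disjoint union of T_r(n-1) and an isolated vertex. -/
namespace TraceableAux
open Finset

/-- List version of traceability. -/
def ListTraceable {V : Type} (G : SimpleGraph V) : Prop :=
  ∃ l : List V, l.Nodup ∧ (∀ v, v ∈ l) ∧ l.IsChain G.Adj

lemma walk_of_listTraceable {V : Type} [DecidableEq V] [Nonempty V] (G : SimpleGraph V)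
    (h : ListTraceable G) : ∃ (u w : V) (p : G.Walk u w), p.IsHamiltonian := by
  obtain ⟨l, hnd, hall, hch⟩ := h
  have hne : l ≠ [] := by
    rintro rfl
    simpa using hall (Classical.arbitrary V)
  refine ⟨_, _, SimpleGraph.Walk.ofSupport l hne hch, ?_⟩
  apply SimpleGraph.Walk.IsPath.isHamiltonian_of_mem
  · apply SimpleGraph.Walk.IsPath.mk'
    rwa [SimpleGraph.Walk.support_ofSupport]
  · rwa [SimpleGraph.Walk.support_ofSupport]

lemma count_lemma {V : Type} (p q : V → Bool) : ∀ (L : List V) (hne : L ≠ []),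
    q (L.head hne) = false → p (L.getLast hne) = false →
    L.IsChain (fun a b => ¬ (p a = true ∧ q b = true)) →
    L.countP p + L.countP q + 1 ≤ L.length := by
  suffices H : ∀ (L : List V) (x : V), p ((x :: L).getLast (by simp)) = false →
      (x :: L).IsChain (fun a b => ¬ (p a = true ∧ q b = true)) →
      (x :: L).countP p + L.countP q ≤ L.length by
    intro L hne h1 h2 h3
    cases L with
    | nil => exact absurd rfl hne
    | cons x L =>
      have := H L x h2 h3
      simp only [List.head_cons] at h1
      rw [List.countP_cons (p := q)]
      simp only [h1, List.length_cons]
      simp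
      omega
  intro L
  induction L with
  | nil => intro x h _; simp at h; simp [h]
  | cons y M ih =>
    intro x h1 h2
    rw [List.isChain_cons_cons] at h2
    have := ih y (by simpa using h1) h2.2
    have h3 := h2.1
    rw [List.countP_cons (p := p) (a := x), List.countP_cons (p := q)]
    simp only [List.length_cons]
    split_ifs with hx hy hy <;> first | omega | exact absurd ⟨hx, hy⟩ h3

lemma degree_eq_countP {V : Type} [Fintype V] [DecidableEq V] (G : SimpleGraph V)
    [DecidableRel G.Adj] (l : List V) (hnd : l.Nodup) (hall : ∀ v, v ∈ l) (u : V) :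
    G.degree u = l.countP (fun x => decide (G.Adj u x)) := by
  rw [List.countP_eq_length_filter, ← List.toFinset_card_of_nodup (hnd.filter _),
    ← SimpleGraph.card_neighborFinset_eq_degree]
  congr 1
  ext x
  simp [hall]

/-- Core crossing argument. -/
lemma crossing {V : Type} [Fintype V] [DecidableEq V] (G : SimpleGraph V)
    [DecidableRel G.Adj] (hG : ¬ ListTraceable G) (A B : List V) (u v : V)
    (hnd : (A ++ [u] ++ v :: B).Nodup) (hall : ∀ x, x ∈ A ++ [u] ++ v :: B)
    (hA : (A ++ [u]).IsChain G.Adj) (hB : (v :: B).IsChain G.Adj) :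
    G.degree u + G.degree v + 2 ≤ Fintype.card V := by
  have hlen : (A ++ [u] ++ v :: B).length = Fintype.card V := by
    rw [← List.toFinset_card_of_nodup hnd, ← Finset.card_univ]
    congr 1
    ext x
    have := hall x
    simp at this ⊢
    tauto
  have key : ∀ l : List V, l.Perm (A ++ [u] ++ v :: B) → ¬ l.IsChain G.Adj := by
    intro l hl hc
    exact hG ⟨l, hl.nodup_iff.2 hnd, fun x => hl.mem_iff.2 (hall x), hc⟩
  have hsymm : (fun a b => G.Adj b a) = G.Adj := by
    ext a b; exact G.adj_comm b a
  have hrev : ∀ l : List V, l.reverse.IsChain G.Adj ↔ l.IsChain G.Adj := by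
    intro l; rw [List.isChain_reverse, hsymm]
  have c1 := count_lemma (fun x => decide (G.Adj u x)) (fun x => decide (G.Adj v x))
    (A ++ [u]) (by simp) ?_ (by simp) ?_
  have c2 := count_lemma (fun x => decide (G.Adj u x)) (fun x => decide (G.Adj v x))
    (v :: B) (by simp) (by simp) ?_ ?_
  · rw [degree_eq_countP G _ hnd hall u, degree_eq_countP G _ hnd hall v, ← hlen,
      List.countP_append (l₁ := A ++ [u]), List.countP_append (l₁ := A ++ [u]),
      List.length_append (as := A ++ [u])]
    omega
  · -- last of B adjacent to u
    by_contra hcon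
    simp only [Bool.not_eq_false, decide_eq_true_eq] at hcon
    apply key ((A ++ [u]) ++ (v :: B).reverse)
    · exact List.Perm.append_left _ (List.reverse_perm _)
    · rw [List.isChain_append]
      refine ⟨hA, (hrev _).2 hB, ?_⟩
      intro x hx y hy
      simp only [List.getLast?_append, List.head?_reverse] at hx hy
      rw [List.getLast?_eq_some_getLast (by simp)] at hy
      simp at hx hy
      subst hx; subst hy
      exact hcon
  · rw [List.isChain_iff_forall_rel_of_append_cons_cons]
    intro a b X Y hXY ⟨h1, h2⟩
    simp only [decide_eq_true_eq] at h1 h2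
    -- A u, a .. X reversed, b Y
    apply key ((A ++ [u]) ++ ((X ++ [a]).reverse ++ b :: Y))
    · apply List.Perm.append_left
      rw [hXY]
      have : X ++ a :: b :: Y = (X ++ [a]) ++ b :: Y := by simp
      rw [this]
      exact List.Perm.append_right _ (List.reverse_perm _)
    · rw [hXY, List.isChain_append_cons_cons] at hB
      rw [List.isChain_append]
      refine ⟨hA, ?_, ?_⟩
      · rw [List.isChain_append]
        refine ⟨(hrev _).2 hB.1, hB.2.2, ?_⟩
        intro x hx y hy
        rw [List.getLast?_reverse] at hx
        have : x = v := by
          cases X with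
          | nil => simp at hXY hx; rw [← hx, ← hXY.1]
          | cons z X => simp at hXY hx; rw [← hx, ← hXY.1]
        simp at hy
        subst hy; subst this; exact h2
      · intro x hx y hy
        simp at hx hy
        subst hx; subst hy; exact h1
  · -- head of A adjacent to v
    by_contra hcon
    simp only [Bool.not_eq_false, decide_eq_true_eq] at hcon
    apply key ((A ++ [u]).reverse ++ (v :: B))
    · exact List.Perm.append_right _ (List.reverse_perm _)
    · rw [List.isChain_append]
      refine ⟨(hrev _).2 hA, hB, ?_⟩
      intro x hx y hy
      rw [List.getLast?_reverse, List.head?_eq_some_head (by simp)] at hx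
      simp only [Option.mem_def, Option.some.injEq, List.head?_cons] at hx hy
      subst hx; subst hy
      exact hcon.symm
  · rw [List.isChain_iff_forall_rel_of_append_cons_cons]
    intro a b X Y hXY ⟨h1, h2⟩
    simp only [decide_eq_true_eq] at h1 h2
    -- X a, reversed(b Y) , v B
    apply key ((X ++ [a]) ++ (b :: Y).reverse ++ v :: B)
    · apply List.Perm.append_right
      rw [hXY]
      have : X ++ a :: b :: Y = (X ++ [a]) ++ b :: Y := by simp
      rw [this]
      exact List.Perm.append_left _ (List.reverse_perm _)
    · have hlast : (b :: Y).getLast? = some u := by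
        have := congrArg List.getLast? hXY
        simpa using this.symm
      rw [hXY, List.isChain_append_cons_cons] at hA
      rw [List.isChain_append, List.isChain_append]
      refine ⟨⟨hA.1, (hrev _).2 hA.2.2, ?_⟩, hB, ?_⟩
      · intro x hx y hy
        rw [List.head?_reverse, hlast] at hy
        simp at hx hy
        subst hx; subst hy; exact h1.symm
      · intro x hx y hy
        rw [List.getLast?_append_of_ne_nil _ (by simp), List.getLast?_reverse] at hx
        simp at hx hy
        subst hx; subst hy; exact h2.symm

lemma ore_lemma {V : Type} [Fintype V] [DecidableEq V] (G H : SimpleGraph V)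
    [DecidableRel G.Adj] (u v : V)
    (hH : ∀ x y, H.Adj x y → G.Adj x y ∨ (x = u ∧ y = v) ∨ (x = v ∧ y = u))
    (hG : ¬ ListTraceable G) (hT : ListTraceable H) :
    G.degree u + G.degree v + 2 ≤ Fintype.card V := by
  obtain ⟨l, hnd, hall, hch⟩ := hT
  have hnc : ¬ l.IsChain G.Adj := fun h => hG ⟨l, hnd, hall, h⟩
  rw [List.isChain_iff_forall_rel_of_append_cons_cons] at hnc
  push Not at hnc
  obtain ⟨a, b, X, Y, rfl, hab⟩ := hnc
  have heq : X ++ a :: b :: Y = X ++ [a] ++ b :: Y := by simp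
  have hch' := hch
  rw [List.isChain_append_cons_cons] at hch'
  obtain ⟨hX, hHab, hY⟩ := hch'
  rw [heq] at hnd hall
  have hab' : (a = u ∧ b = v) ∨ (a = v ∧ b = u) := (hH a b hHab).resolve_left hab
  have hH' : ∀ x y, H.Adj x y → G.Adj x y ∨ (x = a ∧ y = b) ∨ (x = b ∧ y = a) := by
    intro x y h
    rcases hab' with ⟨rfl, rfl⟩ | ⟨rfl, rfl⟩
    · exact hH x y h
    · have := hH x y h; tauto
  have hdisj := (List.nodup_append.1 hnd).2.2
  have hXG : (X ++ [a]).IsChain G.Adj := by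
    rw [List.isChain_iff_forall_rel_of_append_cons_cons] at hX ⊢
    intro x y P Q hPQ
    have hx : x ∈ X ++ [a] := by rw [hPQ]; simp
    have hy : y ∈ X ++ [a] := by rw [hPQ]; simp
    have h1 := hdisj x hx b (by simp)
    have h2 := hdisj y hy b (by simp)
    have := hH' x y (hX hPQ)
    tauto
  have hYG : (b :: Y).IsChain G.Adj := by
    rw [List.isChain_iff_forall_rel_of_append_cons_cons] at hY ⊢
    intro x y P Q hPQ
    have hx : x ∈ b :: Y := by rw [hPQ]; simp
    have hy : y ∈ b :: Y := by rw [hPQ]; simp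
    have h1 := hdisj a (by simp) x hx
    have h2 := hdisj a (by simp) y hy
    have := hH' x y (hY hPQ)
    tauto
  have := crossing G hG X Y a b hnd hall hXG hYG
  rcases hab' with ⟨rfl, rfl⟩ | ⟨rfl, rfl⟩ <;> omega

/-- Posa-type condition. -/
lemma posa {V : Type} [Fintype V] [DecidableEq V] (G : SimpleGraph V)
    [DecidableRel G.Adj] (hG : ¬ ListTraceable G) :
    ∃ i : ℕ, 1 ≤ i ∧ 2 * i ≤ Fintype.card V ∧
      ∃ S : Finset V, S.card = i ∧ ∀ x ∈ S, G.degree x + 1 ≤ i := by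
  classical
  obtain ⟨M, hGM, hM⟩ := Finite.exists_le_maximal (p := fun H : SimpleGraph V => ¬ ListTraceable H) hG
  have hMn := hM.prop
  let T : Finset (V × V) := Finset.univ.filter fun q => q.1 ≠ q.2 ∧ ¬ M.Adj q.1 q.2 ∧ M.degree q.1 ≤ M.degree q.2
  have hT : T.Nonempty := by
    by_contra hcon
    rw [Finset.not_nonempty_iff_eq_empty] at hcon
    have hadj : ∀ x y, x ≠ y → M.Adj x y := by
      intro x y hxy
      by_contra hn
      rcases le_total (M.degree x) (M.degree y) with h | h
      · have : (x, y) ∈ T := by simp [T, hxy, hn, h]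
        simp [hcon] at this
      · have : (y, x) ∈ T := by simp [T, hxy.symm, M.adj_comm, hn, h]
        simp [hcon] at this
    apply hMn
    refine ⟨Finset.univ.toList, Finset.nodup_toList _, by simp, ?_⟩
    apply List.Pairwise.isChain
    exact (Finset.nodup_toList _).imp (fun h => hadj _ _ h)
  obtain ⟨⟨u, v⟩, huv, hmax⟩ := T.exists_max_image (fun q => M.degree q.1 + M.degree q.2) hT
  simp only [T, Finset.mem_filter, Finset.mem_univ, true_and] at huv
  obtain ⟨hne, hnadj, hdeg⟩ := huv
  have hore : M.degree u + M.degree v + 2 ≤ Fintype.card V := by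
    have hlt : M < M ⊔ SimpleGraph.edge u v := by
      refine lt_of_le_of_ne le_sup_left ?_
      intro h
      apply hnadj
      rw [h]
      simp [SimpleGraph.edge_adj, hne]
    have : ListTraceable (M ⊔ SimpleGraph.edge u v) := by
      by_contra h
      exact hlt.not_ge (hM.2 h hlt.le)
    refine ore_lemma M _ u v ?_ hMn this
    intro x y h
    rw [SimpleGraph.sup_adj, SimpleGraph.edge_adj] at h
    tauto
  let W : Finset V := (insert v (M.neighborFinset v))ᶜ
  have hW : M.degree u + 1 ≤ W.card := by
    have h1 : (insert v (M.neighborFinset v)).card = M.degree v + 1 := by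
      rw [Finset.card_insert_of_notMem (by simp), SimpleGraph.card_neighborFinset_eq_degree]
    simp only [W]
    rw [Finset.card_compl, h1]
    omega
  obtain ⟨S, hSW, hS⟩ := Finset.exists_subset_card_eq hW
  refine ⟨M.degree u + 1, by omega, by omega, S, hS, ?_⟩
  intro x hx
  have hxW := hSW hx
  simp only [W, Finset.mem_compl, Finset.mem_insert, SimpleGraph.mem_neighborFinset, not_or] at hxW
  have hle : G.degree x ≤ M.degree x := by
    rw [← SimpleGraph.card_neighborFinset_eq_degree, ← SimpleGraph.card_neighborFinset_eq_degree]
    apply Finset.card_le_card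
    intro y hy
    simp only [SimpleGraph.mem_neighborFinset] at hy ⊢
    exact hGM hy
  rcases le_total (M.degree x) (M.degree v) with h | h
  · have := hmax (x, v) (by simp [T, hxW.1, M.adj_comm, hxW.2, h])
    simp at this
    omega
  · have := hmax (v, x) (by simp [T, Ne.symm hxW.1, hxW.2, h])
    simp at this
    omega


/-- Number of edges of the Turan graph. -/
def tn (r m : ℕ) : ℕ := (SimpleGraph.turanGraph m r).edgeFinset.card

lemma tn_add (r m : ℕ) : tn r (m + r) = tn r m + m * (r - 1) + r.choose 2 :=
  SimpleGraph.card_edgeFinset_turanGraph_add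

lemma tn_small (r m : ℕ) (h : m ≤ r) : tn r m = m.choose 2 := by
  have := SimpleGraph.card_edgeFinset_top_eq_card_choose_two (V := Fin m)
  rw [Fintype.card_fin] at this
  unfold tn
  convert! this
  rw [SimpleGraph.turanGraph_eq_top]; exact .inr h

lemma tn_succ (r : ℕ) (hr : 0 < r) (m : ℕ) : tn r (m + 1) + m / r = tn r m + m := by
  induction m using Nat.strong_induction_on with
  | _ m ih =>
    rcases lt_or_ge m r with h | h
    · rw [tn_small r m h.le, tn_small r (m + 1) h, Nat.div_eq_of_lt h,
        Nat.choose_succ_succ' m 1]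
      simp; omega
    · obtain ⟨k, rfl⟩ := Nat.exists_eq_add_of_le' h
      have h1 := ih k (by omega)
      have h2 : k + r + 1 = (k + 1) + r := by ring
      rw [h2, tn_add, tn_add, Nat.add_div_right _ hr, add_mul]
      omega

lemma tn_mono_diff (s r : ℕ) (hs : 0 < s) (hsr : s ≤ r) (a k : ℕ) :
    tn s (a + k) + tn r a ≤ tn r (a + k) + tn s a := by
  induction k with
  | zero => simp [add_comm]
  | succ k ih =>
    have h1 := tn_succ s hs (a + k)
    have h2 := tn_succ r (by omega) (a + k)
    have h3 : (a + k) / r ≤ (a + k) / s := Nat.div_le_div_left hsr hs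
    rw [← add_assoc]
    omega

lemma tn_three (m : ℕ) : 3 * tn 3 m ≤ m ^ 2 ∧ m ^ 2 ≤ 3 * tn 3 m + 1 := by
  induction m using Nat.strong_induction_on with
  | _ m ih =>
    rcases lt_or_ge m 3 with h | h
    · rw [tn_small 3 m h.le]
      interval_cases m <;> decide
    · obtain ⟨k, rfl⟩ := Nat.exists_eq_add_of_le' h
      have h1 := ih k (by omega)
      have : Nat.choose 3 2 = 3 := rfl
      rw [tn_add, this]
      constructor <;> nlinarith

lemma tn_four (m : ℕ) : 8 * tn 4 m ≤ 3 * m ^ 2 ∧ 3 * m ^ 2 ≤ 8 * tn 4 m + 4 := by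
  induction m using Nat.strong_induction_on with
  | _ m ih =>
    rcases lt_or_ge m 4 with h | h
    · rw [tn_small 4 m h.le]
      interval_cases m <;> decide
    · obtain ⟨k, rfl⟩ := Nat.exists_eq_add_of_le' h
      have h1 := ih k (by omega)
      have : Nat.choose 4 2 = 6 := rfl
      rw [tn_add, this]
      constructor <;> nlinarith

/-- Numeric inequality: generic case. -/
lemma num_generic (r n i : ℕ) (hr : 3 ≤ r) (hi : 1 ≤ i) (hn : 2 * i + 1 ≤ n) :
    i * (i - 1) + tn r (n - i) ≤ tn r (n - 1) := by
  obtain ⟨k, rfl⟩ := Nat.exists_eq_add_of_le' hi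
  obtain ⟨b, rfl⟩ := Nat.exists_eq_add_of_le hn
  have h1 := tn_mono_diff 3 r (by omega) hr (k + b + 2) k
  have e1 : 2 * (k + 1) + 1 + b - (k + 1) = k + b + 2 := by omega
  have e2 : 2 * (k + 1) + 1 + b - 1 = k + b + 2 + k := by omega
  rw [e1, e2]
  have h2 := (tn_three (k + b + 2)).1
  have h3 := (tn_three (k + b + 2 + k)).2
  simp only [Nat.add_sub_cancel]
  rcases Nat.eq_zero_or_pos k with rfl | hk
  · simp
  · have : (k + 1) * k + tn 3 (k + b + 2) ≤ tn 3 (k + b + 2 + k) := by nlinarith [Nat.zero_le (k * b)]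
    omega

lemma num_four (r i : ℕ) (hr : 4 ≤ r) (hi : 16 ≤ i) :
    i * (i - 1) + tn r i ≤ tn r (2 * i - 1) := by
  obtain ⟨k, rfl⟩ := Nat.exists_eq_add_of_le' (show 1 ≤ i by omega)
  have h1 := tn_mono_diff 4 r (by omega) hr (k + 1) k
  have e2 : 2 * (k + 1) - 1 = k + 1 + k := by omega
  rw [e2]
  have h2 := (tn_four (k + 1)).1
  have h3 := (tn_four (k + 1 + k)).2
  simp only [Nat.add_sub_cancel]
  have : (k + 1) * k + tn 4 (k + 1) ≤ tn 4 (k + 1 + k) := by nlinarith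
  omega

section Counting
set_option linter.unusedSectionVars false
variable {V : Type} [Fintype V] [DecidableEq V] (G : SimpleGraph V) [DecidableRel G.Adj]

/-- Ordered adjacent pairs. -/
def cnt (X Y : Finset V) : ℕ := ∑ x ∈ X, ∑ y ∈ Y, if G.Adj x y then 1 else 0

lemma cnt_comm (X Y : Finset V) : cnt G X Y = cnt G Y X := by
  unfold cnt
  rw [Finset.sum_comm]
  simp_rw [G.adj_comm]

lemma degree_eq_sum (x : V) : G.degree x = ∑ y, if G.Adj x y then 1 else 0 := by
  rw [← SimpleGraph.card_neighborFinset_eq_degree, SimpleGraph.neighborFinset_eq_filter,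
    Finset.card_filter]

lemma sum_degree (S : Finset V) : ∑ x ∈ S, G.degree x = cnt G S S + cnt G S Sᶜ := by
  unfold cnt
  rw [← Finset.sum_add_distrib]
  apply Finset.sum_congr rfl
  intro x _
  rw [degree_eq_sum, Finset.sum_add_sum_compl]

lemma edges_eq (S : Finset V) :
    2 * G.edgeFinset.card = cnt G S S + 2 * cnt G S Sᶜ + cnt G Sᶜ Sᶜ := by
  rw [← SimpleGraph.sum_degrees_eq_twice_card_edges, ← Finset.sum_add_sum_compl S,
    sum_degree, sum_degree, compl_compl, cnt_comm G Sᶜ S]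
  ring

lemma cnt_induce (R : Set V) [DecidablePred (· ∈ R)] :
    cnt G R.toFinset R.toFinset = 2 * (G.induce R).edgeFinset.card := by
  rw [← SimpleGraph.sum_degrees_eq_twice_card_edges]
  unfold cnt
  rw [← Finset.sum_coe_sort]
  have hsum : ∀ f : V → ℕ, ∑ x ∈ R.toFinset, f x = ∑ x : R, f x := by
    intro f
    rw [Finset.sum_subtype (p := (· ∈ R))]
    simp
  rw [Finset.sum_coe_sort R.toFinset (fun i => ∑ y ∈ R.toFinset, if G.Adj i y then 1 else 0), hsum]
  apply Finset.sum_congr rfl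
  intro x _
  rw [degree_eq_sum, hsum]
  rfl

lemma cnt_turan (r : ℕ) (R : Finset V) (h : G.CliqueFreeOn (R : Set V) (r + 1)) :
    cnt G R R ≤ 2 * tn r R.card := by
  classical
  have h1 := cnt_induce G (R : Set V)
  have h2 := ((SimpleGraph.cliqueFree_induce_iff (G := G) (R : Set V) (r + 1)).2 h).card_edgeFinset_le
  simp only [Finset.coe_sort_coe, Fintype.card_coe] at h2
  rw [← SimpleGraph.card_edgeFinset_turanGraph] at h2
  simp only [Finset.toFinset_coe] at h1
  rw [h1]
  unfold tn
  convert! Nat.mul_le_mul_left 2 h2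

end Counting

lemma cnt_insert_le {V : Type} [Fintype V] [DecidableEq V] (G : SimpleGraph V)
    [DecidableRel G.Adj] (z : V) (Q : Finset V) (hz : z ∉ Q) :
    cnt G (insert z Q) (insert z Q) ≤ cnt G Q Q + 2 * Q.card := by
  have hle : ∀ x : V, ∑ y ∈ Q, (if G.Adj x y then 1 else 0) ≤ Q.card := by
    intro x
    rw [← Finset.card_filter]
    exact Finset.card_filter_le _ _
  unfold cnt
  rw [Finset.sum_insert hz, Finset.sum_insert hz]
  simp_rw [Finset.sum_insert hz]
  rw [Finset.sum_add_distrib]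
  have h1 := hle z
  have h2 : ∑ x ∈ Q, (if G.Adj x z then 1 else 0) ≤ Q.card := by
    rw [← Finset.card_filter]
    exact Finset.card_filter_le _ _
  simp only [SimpleGraph.irrefl, if_false]
  omega

/-- The tight case `r = 3`, `n = 2 i`. -/
lemma tight_case {V : Type} [Fintype V] [DecidableEq V] (G : SimpleGraph V)
    [DecidableRel G.Adj] (hfree : G.CliqueFree 4) (i : ℕ) (hi : 16 ≤ i)
    (hcard : Fintype.card V = 2 * i) (S : Finset V) (hS : S.card = i)
    (hdeg : ∀ x ∈ S, G.degree x + 1 ≤ i) :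
    G.edgeFinset.card ≤ tn 3 (2 * i - 1) := by
  obtain ⟨k, rfl⟩ := Nat.exists_eq_add_of_le' (show 2 ≤ i by omega)
  have hR : Sᶜ.card = k + 2 := by rw [Finset.card_compl, hS, hcard]; omega
  have hE := edges_eq G S
  have hD := sum_degree G S
  have hD' : ∑ x ∈ S, G.degree x ≤ (k + 2) * (k + 1) := by
    have := Finset.sum_le_card_nsmul S (fun x => G.degree x) (k + 1)
      (fun x hx => by have := hdeg x hx; omega)
    simpa [hS] using this
  have e2 : 2 * (k + 2) - 1 = 2 * k + 3 := by omega
  rw [e2]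
  have h3 := (tn_three (2 * k + 3)).2
  have hon : ∀ X : Set V, G.CliqueFreeOn X 4 := fun X t _ ht => hfree t ht
  by_cases hv : ∃ v ∈ S, k + 1 ≤ (Sᶜ.filter (G.Adj v)).card
  · obtain ⟨v, hvS, hv⟩ := hv
    obtain ⟨Q, hQsub, hQ⟩ := Finset.exists_subset_card_eq hv
    have hQR : Q ⊆ Sᶜ := hQsub.trans (Finset.filter_subset _ _)
    have hQf : G.CliqueFreeOn (Q : Set V) 3 := by
      have hnb : G.CliqueFreeOn (Set.univ ∩ G.neighborSet v) 3 :=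
        SimpleGraph.CliqueFreeOn.of_succ G (n := 3) (hon Set.univ) (Set.mem_univ v)
      refine SimpleGraph.CliqueFreeOn.subset G ?_ hnb
      intro x hx
      have := hQsub hx
      simp only [Finset.mem_filter] at this
      exact ⟨trivial, this.2⟩
    have hT := cnt_turan G 2 Q hQf
    have hdiff : (Sᶜ \ Q).card = 1 := by
      rw [Finset.card_sdiff_of_subset hQR]; omega
    obtain ⟨z, hz⟩ := Finset.card_eq_one.1 hdiff
    have hzQ : z ∉ Q := by
      have : z ∈ Sᶜ \ Q := by rw [hz]; simp
      exact (Finset.mem_sdiff.1 this).2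
    have hins : insert z Q = Sᶜ := by
      rw [Finset.insert_eq, ← hz, Finset.sdiff_union_of_subset hQR]
    have hc := cnt_insert_le G z Q hzQ
    rw [hins, hQ] at hc
    rw [hQ] at hT
    have h2 : 2 * 2 * tn 2 (k + 1) ≤ (2 - 1) * (k + 1) ^ 2 :=
      SimpleGraph.mul_card_edgeFinset_turanGraph_le
    nlinarith
  · push Not at hv
    have hSR : cnt G S Sᶜ ≤ (k + 2) * k := by
      have := Finset.sum_le_card_nsmul S
        (fun x => ∑ y ∈ Sᶜ, if G.Adj x y then 1 else 0) k (fun x hx => by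
          have hlt := hv x hx
          rw [← Finset.card_filter]
          exact Nat.lt_succ_iff.1 hlt)
      simpa [hS, cnt] using this
    have hT := cnt_turan G 3 Sᶜ (hon _)
    rw [hR] at hT
    have h2 := (tn_three (k + 2)).1
    nlinarith

end TraceableAux

open TraceableAux in

/-- Theorem 5.3 (r ≥ 3, n ≥ 32): an `n`-vertex `K_{r+1}`-free graph that is not traceable
has at most `e(T_r(n-1))` edges, with equality if `G` is the Turán graph `T_r(n-1)`
together with an isolated vertex. -/
theorem cliqueFree_not_traceable_edge_bound
    {V : Type} [Fintype V] [DecidableEq V]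
    (G : SimpleGraph V) [DecidableRel G.Adj] (n r : ℕ)
    (hr : 3 ≤ r) (hn : 32 ≤ n) (hcard : Fintype.card V = n)
    (hfree : G.CliqueFree (r + 1))
    (hnt : ¬ ∃ (u w : V) (p : G.Walk u w), p.IsHamiltonian) :
    G.edgeFinset.card ≤ (SimpleGraph.turanGraph (n - 1) r).edgeFinset.card ∧
    ((∃ v : V, G.degree v = 0 ∧
        Nonempty ((G.induce ({v}ᶜ : Set V)) ≃g SimpleGraph.turanGraph (n - 1) r)) →
      G.edgeFinset.card = (SimpleGraph.turanGraph (n - 1) r).edgeFinset.card) := by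
  constructor
  · have hne : Nonempty V := Fintype.card_pos_iff.1 (by omega)
    have hG : ¬ ListTraceable G := fun h => hnt (walk_of_listTraceable G h)
    obtain ⟨i, hi1, hi2, S, hS, hdeg⟩ := posa G hG
    change G.edgeFinset.card ≤ tn r (n - 1)
    rw [hcard] at hi2
    by_cases htight : n = 2 * i ∧ r = 3
    · obtain ⟨rfl, rfl⟩ := htight
      exact tight_case G hfree i (by omega) hcard S hS hdeg
    have hnum : i * (i - 1) + tn r (n - i) ≤ tn r (n - 1) := by
      by_cases h : n = 2 * i
      · subst h
        have e : 2 * i - i = i := by omega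
        rw [e]
        exact num_four r i (by omega) (by omega)
      · exact num_generic r n i hr hi1 (by omega)
    have hE := edges_eq G S
    have hD := sum_degree G S
    have hD' : ∑ x ∈ S, G.degree x ≤ i * (i - 1) := by
      have := Finset.sum_le_card_nsmul S (fun x => G.degree x) (i - 1)
        (fun x hx => by have := hdeg x hx; omega)
      simpa [hS] using this
    have hT := cnt_turan G r Sᶜ (fun t _ ht => hfree t ht)
    rw [Finset.card_compl, hS, hcard] at hT
    omega
  · rintro ⟨v, hv, ⟨f⟩⟩
    classical
    have hE := edges_eq G {v}
    have hD := sum_degree G {v}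
    rw [Finset.sum_singleton, hv] at hD
    have hI := cnt_induce G ({v}ᶜ : Set V)
    have hset : ({v}ᶜ : Set V).toFinset = ({v} : Finset V)ᶜ := by
      ext x; simp
    rw [hset] at hI
    have hf := f.card_edgeFinset_eq
    have hI' : cnt G {v}ᶜ {v}ᶜ = 2 * (SimpleGraph.turanGraph (n - 1) r).edgeFinset.card := by
      rw [hI, ← hf]
    omega
end

section
/- Let r ≥ 3 and n ≥ 32. If G is an n-vertex K_{r+1}-free graph that is not Hamiltonian, then e(G) ≤ e(T_r(n-1)) + 1, and equality holds if G is obtained from T_r(n-1) by adding a new vertex of degree 1. -/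
namespace HamTuran
open SimpleGraph Finset

lemma card_le_turan {W : Type*} [Fintype W] (G : SimpleGraph W) [DecidableRel G.Adj] (r : ℕ)
    (h : G.CliqueFree (r + 1)) :
    G.edgeFinset.card ≤ (turanGraph (Fintype.card W) r).edgeFinset.card := by
  rw [card_edgeFinset_turanGraph]
  exact h.card_edgeFinset_le

lemma turan_step (r : ℕ) (hr : 3 ≤ r) (j : ℕ) :
    3 * (turanGraph j r).edgeFinset.card + 2 * j ≤ 3 * (turanGraph (j + 1) r).edgeFinset.card := by
  induction j using Nat.strong_induction_on with
  | _ j ih =>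
    rcases lt_or_ge j r with h | h
    · have h0 : ∀ m, m ≤ r → (turanGraph m r).edgeFinset.card = m.choose 2 := by
        intro m hm
        have := card_edgeFinset_top_eq_card_choose_two (V := Fin m)
        rw [Fintype.card_fin] at this
        convert! this
        rw [turanGraph_eq_top]; exact .inr hm
      rw [h0 j h.le, h0 (j + 1) h, Nat.choose_succ_succ' j 1, Nat.choose_one_right]
      simp only [Nat.reduceAdd]
      omega
    · obtain ⟨i, rfl⟩ := Nat.exists_eq_add_of_le' h
      have h1 := ih i (by omega)
      rw [show i + r + 1 = (i + 1) + r by ring, card_edgeFinset_turanGraph_add,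
        card_edgeFinset_turanGraph_add]
      obtain ⟨q, rfl⟩ := Nat.exists_eq_add_of_le' hr
      have : q + 3 - 1 = q + 2 := rfl
      rw [this]
      have : (i + 1) * (q + 2) = i * (q + 2) + (q + 2) := by ring
      omega

lemma turan_steps (r : ℕ) (hr : 3 ≤ r) (a d : ℕ) :
    3 * (turanGraph a r).edgeFinset.card + d * (2 * a + d) ≤
      3 * (turanGraph (a + d) r).edgeFinset.card + d := by
  induction d with
  | zero => simp
  | succ d ih =>
    have := turan_step r hr (a + d)
    rw [← add_assoc a d 1]
    have : (d + 1) * (2 * a + (d + 1)) = d * (2 * a + d) + 2 * (a + d) + 1 := by ring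
    omega

lemma card_le_remove {V : Type*} [Fintype V] [DecidableEq V]
    (G : SimpleGraph V) [DecidableRel G.Adj] (r : ℕ) (hfree : G.CliqueFree (r + 1))
    (S : Finset V) :
    G.edgeFinset.card ≤ (turanGraph (Fintype.card V - S.card) r).edgeFinset.card +
      ∑ v ∈ S, G.degree v := by
  classical
  let s : Set V := (↑S : Set V)ᶜ
  let G' := (G.induce s).spanningCoe
  have h1 : G.edgeFinset ⊆ G'.edgeFinset ∪ S.biUnion (fun v => G.incidenceFinset v) := by
    intro e
    induction e with
    | h x y =>
      intro he
      rw [mem_edgeFinset, mem_edgeSet] at he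
      simp only [Finset.mem_union, mem_edgeFinset, mem_edgeSet, Finset.mem_biUnion,
        mem_incidenceFinset, mk'_mem_incidenceSet_iff]
      by_cases hx : x ∈ S
      · exact .inr ⟨x, hx, he, .inl rfl⟩
      by_cases hy : y ∈ S
      · exact .inr ⟨y, hy, he, .inr rfl⟩
      left
      simp [G', s, hx, hy, he]
  have h2 : G'.edgeFinset.card = (G.induce s).edgeFinset.card := by
    simp only [G', SimpleGraph.spanningCoe]
    exact card_edgeFinset_map _ _
  have h3 := card_le_turan (G.induce s) r (hfree.comap ⟨(Embedding.induce s).toCopy⟩)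
  have h4 : Fintype.card s = Fintype.card V - S.card := by
    rw [Fintype.card_compl_set]; simp
  rw [h4] at h3
  calc _ ≤ _ := card_le_card h1
    _ ≤ _ := card_union_le _ _
    _ ≤ _ := add_le_add (h2.le.trans h3) card_biUnion_le
    _ = _ := by simp

section Ham
variable {V : Type*} [Fintype V] [DecidableEq V] {H : SimpleGraph V}

lemma ham_of_path (h3 : 3 ≤ Fintype.card V) {a b : V} (q : H.Walk a b) (hq : q.IsHamiltonian)
    (hab : H.Adj b a) : H.IsHamiltonian := by
  intro _
  refine ⟨b, .cons hab q, ?_⟩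
  have hl := hq.length_eq
  rw [Walk.isHamiltonianCycle_iff_isCycle_and_length_eq]
  refine ⟨(Walk.cons_isCycle_iff _ _).2 ⟨hq.isPath, ?_⟩, ?_⟩
  · intro he
    rw [Sym2.eq_swap] at he
    have := hq.isPath.length_eq_one_of_mem_edges he
    omega
  · simp; omega

lemma ham_top (h3 : 3 ≤ Fintype.card V) : (⊤ : SimpleGraph V).IsHamiltonian := by
  have hlen : (univ : Finset V).toList.length = Fintype.card V := by simp
  have hnd := (univ : Finset V).nodup_toList
  have hmem : ∀ x, x ∈ (univ : Finset V).toList := by simp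
  generalize (univ : Finset V).toList = l at *
  have hne : l ≠ [] := by rintro rfl; simp at hlen; omega
  have hc : l.IsChain (⊤ : SimpleGraph V).Adj := List.Pairwise.isChain (hnd.imp (fun h => h))
  refine ham_of_path h3 (Walk.ofSupport l hne hc) ?_ ?_
  · intro x
    rw [Walk.support_ofSupport]
    exact List.count_eq_one_of_mem hnd (hmem x)
  · rw [top_adj, List.head_eq_getElem_zero, List.getLast_eq_getElem]
    intro h
    have := (hnd.getElem_inj_iff).1 h
    omega

lemma ham_path_aux (u v : V) (p : (H ⊔ edge u v).Walk u u) (hp : p.IsHamiltonianCycle)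
    (hs : p.snd = v) : ∃ p : H.Walk u v, p.IsHamiltonian := by
  have hl := hp.length_eq
  have hc := hp.isCycle
  cases p with
  | nil => simp at hc
  | cons h q =>
    simp only [Walk.snd_cons] at hs
    subst hs
    rw [Walk.cons_isCycle_iff] at hc
    have hq : ∀ e ∈ q.edges, e ∈ H.edgeSet := by
      intro e he
      have h1 := q.edges_subset_edgeSet he
      rw [edgeSet_sup, Set.mem_union] at h1
      refine h1.resolve_right (fun h2 => ?_)
      have := edgeSet_edge_of_ne h.ne
      rw [this, Set.mem_singleton_iff] at h2
      subst h2
      exact hc.2 he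
    refine ⟨(q.transfer H hq).reverse, ?_⟩
    rw [Walk.isHamiltonian_iff_isPath_and_length_eq]
    refine ⟨(hc.1.transfer hq).reverse, ?_⟩
    simp at hl ⊢
    omega

lemma ham_path (hnh : ¬ H.IsHamiltonian) (u v : V) (huv : u ≠ v)
    (hmax : (H ⊔ edge u v).IsHamiltonian) : ∃ p : H.Walk u v, p.IsHamiltonian := by
  have : Nontrivial V := ⟨u, v, huv⟩
  obtain ⟨p, hp⟩ := hmax.exists_isHamiltonianCycle u
  by_cases h1 : p.snd = v
  · exact ham_path_aux u v p hp h1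
  by_cases h2 : p.penultimate = v
  · refine ham_path_aux u v p.reverse ?_ (by simpa using h2)
    rw [Walk.isHamiltonianCycle_iff_isCycle_and_length_eq]
    exact ⟨hp.isCycle.reverse, by simpa using hp.length_eq⟩
  exfalso
  have hp1 : ∀ e ∈ p.edges, e ∈ H.edgeSet := by
    intro e he
    have h3 := p.edges_subset_edgeSet he
    rw [edgeSet_sup, Set.mem_union] at h3
    refine h3.resolve_right (fun h4 => ?_)
    rw [edgeSet_edge_of_ne huv, Set.mem_singleton_iff] at h4
    subst h4
    have hc := hp.isCycle
    cases p with
    | nil => simp at hc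
    | cons h q =>
      rw [Walk.cons_isCycle_iff] at hc
      simp only [Walk.snd_cons] at h1
      rw [Walk.edges_cons, List.mem_cons] at he
      rcases he with he | he
      · simp at he
        rcases he with he | ⟨he, he'⟩
        · exact h1 he.symm
        · exact huv he'.symm
      · have h5 := hc.1.eq_penultimate_of_mem_edges he
        cases q with
        | nil => simp at he
        | cons h' q' => exact h2 (by simpa using h5.symm)
  refine hnh (fun _ => ⟨u, p.transfer H hp1, ?_⟩)
  rw [Walk.isHamiltonianCycle_iff_isCycle_and_length_eq]
  exact ⟨hp.isCycle.transfer hp1, by simpa using hp.length_eq⟩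

lemma rot (h3 : 3 ≤ Fintype.card V) {u v : V} (p : H.Walk u v) (hp : p.IsHamiltonian) (i : ℕ)
    (hi : i < p.length) (h1 : H.Adj u (p.getVert (i + 1))) (h2 : H.Adj (p.getVert i) v) :
    H.IsHamiltonian := by
  refine ham_of_path h3 (((p.take i).concat h2).append (p.drop (i+1)).reverse) ?_ h1.symm
  intro x
  refine Eq.trans ?_ (hp x)
  have e : p.support = p.support.take (i+1) ++ p.support.drop (i + 1) := by simp
  conv_rhs => rw [e]
  have h5 := (p.drop (i+1)).support_ne_nil
  have : (p.drop (i+1)).support = p.support.drop (i+1) := by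
    rw [Walk.drop_support_eq_support_drop_min, min_eq_left (by omega)]
  rw [← this]
  rw [Walk.support_append, Walk.support_concat, Walk.support_take, Walk.support_reverse,
    List.append_assoc, List.count_append, List.count_append, List.count_append]
  congr 1
  rw [← List.count_append, ← List.count_reverse (l := (p.drop (i+1)).support),
    ← Walk.support_reverse]
  conv_rhs => rw [← Walk.cons_tail_support]
  rfl

lemma ore [DecidableRel H.Adj] (h3 : 3 ≤ Fintype.card V) (hnh : ¬ H.IsHamiltonian) {u v : V}
    (p : H.Walk u v) (hp : p.IsHamiltonian) : H.degree u + H.degree v < Fintype.card V := by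
  have hl := hp.length_eq
  let A := (range p.length).filter (fun i => H.Adj u (p.getVert (i+1)))
  let B := (range p.length).filter (fun i => H.Adj (p.getVert i) v)
  have hA : H.degree u ≤ A.card := by
    rw [← card_neighborFinset_eq_degree]
    refine (card_le_card (t := A.image (fun i => p.getVert (i+1))) ?_).trans card_image_le
    intro x hx
    rw [mem_neighborFinset] at hx
    obtain ⟨i, rfl, hi⟩ := Walk.mem_support_iff_exists_getVert.1 (hp.mem_support x)
    rcases i with _ | i
    · simp at hx
    · exact mem_image.2 ⟨i, by simp [A, hx]; omega, rfl⟩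
  have hB : H.degree v ≤ B.card := by
    rw [← card_neighborFinset_eq_degree]
    refine (card_le_card (t := B.image (fun i => p.getVert i)) ?_).trans card_image_le
    intro x hx
    rw [mem_neighborFinset] at hx
    obtain ⟨i, rfl, hi⟩ := Walk.mem_support_iff_exists_getVert.1 (hp.mem_support x)
    refine mem_image.2 ⟨i, ?_, rfl⟩
    rcases hi.lt_or_eq with hi | rfl
    · simp [B, hx.symm, hi]
    · simp at hx
  have hd : Disjoint A B := by
    rw [Finset.disjoint_left]
    intro i hi hj
    simp only [A, B, mem_filter, mem_range] at hi hj
    exact hnh (rot h3 p hp i hi.1 hi.2 hj.2)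
  have := card_le_card (union_subset (filter_subset _ _ : A ⊆ range p.length)
    (filter_subset _ _ : B ⊆ range p.length))
  rw [card_union_of_disjoint hd, card_range] at this
  omega

end Ham

lemma chvatal {V : Type*} [Fintype V] [DecidableEq V] (G : SimpleGraph V) [DecidableRel G.Adj]
    (h3 : 3 ≤ Fintype.card V) (hnh : ¬ G.IsHamiltonian) :
    ∃ k, 2 * k < Fintype.card V ∧ ∃ S : Finset V, S.Nonempty ∧ k ≤ S.card ∧
      ∀ v ∈ S, G.degree v ≤ k := by
  classical
  obtain ⟨H, hGH, hH⟩ := Finite.exists_le_maximal (p := fun H : SimpleGraph V => ¬ H.IsHamiltonian) hnh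
  have key : ∀ u v, u ≠ v → ¬ H.Adj u v → H.degree u + H.degree v < Fintype.card V := by
    intro u v huv hadj
    have h1 : (H ⊔ edge u v).IsHamiltonian := by
      by_contra hc
      have := hH.2 hc le_sup_left
      exact hadj (this (by simp [edge_adj, huv]))
    obtain ⟨p, hp⟩ := ham_path hH.1 u v huv h1
    exact ore h3 hH.1 p hp
  let P : Finset (V × V) := univ.filter (fun x => x.1 ≠ x.2 ∧ ¬ H.Adj x.1 x.2)
  have hP : P.Nonempty := by
    by_contra hc
    have htop : H = ⊤ := by
      ext a b
      rw [not_nonempty_iff_eq_empty] at hc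
      have : (a, b) ∉ P := by simp [hc]
      simp only [P, mem_filter, mem_univ, true_and, not_and, not_not] at this
      exact ⟨fun h => h.ne, fun h => this h⟩
    exact hH.1 (htop ▸ ham_top h3)
  obtain ⟨⟨u, v⟩, huv, hm⟩ := exists_max_image P (fun x => H.degree x.1 + H.degree x.2) hP
  wlog hle : H.degree u ≤ H.degree v generalizing u v
  · exact this v u (by simpa [P, H.adj_comm, eq_comm] using huv)
      (by intro x hx; have := hm x hx; simp only at this ⊢; omega) (by omega)
  simp only [P, mem_filter, mem_univ, true_and] at huv
  have hk := key u v huv.1 huv.2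
  refine ⟨H.degree u, by omega, univ.filter (fun x => x ≠ v ∧ ¬ H.Adj x v), ⟨u, by simpa using huv⟩, ?_, ?_⟩
  · have : (univ : Finset V) ⊆ univ.filter (fun x => x ≠ v ∧ ¬ H.Adj x v) ∪ insert v (H.neighborFinset v) := by
      intro x _
      simp [H.adj_comm v x]
      tauto
    have := (card_le_card this).trans (card_union_le _ _)
    have h4 := card_insert_le v (H.neighborFinset v)
    rw [card_neighborFinset_eq_degree] at h4
    rw [card_univ] at this
    omega
  · intro x hx
    have := hm (x, v) (by simpa [P] using hx)
    simp only at this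
    have := degree_le_of_le (v := x) hGH
    omega

end HamTuran

open HamTuran in
/-- Theorem 5.4 (r ≥ 3, n ≥ 32): an `n`-vertex `K_{r+1}`-free graph that is not
Hamiltonian has at most `e(T_r(n-1)) + 1` edges, with equality if `G` is the Turán graph
`T_r(n-1)` plus a new vertex of degree 1. -/
theorem cliqueFree_not_hamiltonian_edge_bound
    {V : Type} [Fintype V] [DecidableEq V]
    (G : SimpleGraph V) [DecidableRel G.Adj] (n r : ℕ)
    (hr : 3 ≤ r) (hn : 32 ≤ n) (hcard : Fintype.card V = n)
    (hfree : G.CliqueFree (r + 1))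
    (hnh : ¬ G.IsHamiltonian) :
    G.edgeFinset.card ≤ (SimpleGraph.turanGraph (n - 1) r).edgeFinset.card + 1 ∧
    ((∃ v : V, G.degree v = 1 ∧
        Nonempty ((G.induce ({v}ᶜ : Set V)) ≃g SimpleGraph.turanGraph (n - 1) r)) →
      G.edgeFinset.card = (SimpleGraph.turanGraph (n - 1) r).edgeFinset.card + 1) := by
  subst hcard
  constructor
  · obtain ⟨k, hk, S, hS, hkS, hd⟩ := chvatal G (by omega) hnh
    have main : ∀ m, 1 ≤ m → m ≤ S.card → m ≤ 8 → (m = 1 ∧ k ≤ 1 ∨ m = 8 ∨ m = k) →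
        G.edgeFinset.card ≤ (SimpleGraph.turanGraph (Fintype.card V - 1) r).edgeFinset.card + 1 := by
      intro m h1 hm h8 hor
      obtain ⟨T, hTS, hT⟩ := Finset.exists_subset_card_eq hm
      have a1 := card_le_remove G r hfree T
      have a2 : ∑ v ∈ T, G.degree v ≤ m * k := by
        rw [← hT, ← smul_eq_mul]
        exact Finset.sum_le_card_nsmul _ _ _ (fun v hv => hd v (hTS hv))
      have a3 := turan_steps r hr (Fintype.card V - T.card) (m - 1)
      rw [show Fintype.card V - T.card + (m - 1) = Fintype.card V - 1 by omega] at a3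
      rw [hT] at *
      generalize Fintype.card V = n at *
      interval_cases m <;> simp only [Nat.reduceSub] at * <;> omega
    rcases le_or_gt k 1 with h | h
    · exact main 1 le_rfl hS.card_pos (by omega) (.inl ⟨rfl, h⟩)
    rcases le_or_gt k 8 with h' | h'
    · exact main k (by omega) hkS h' (.inr (.inr rfl))
    · exact main 8 (by omega) (by omega) le_rfl (.inr (.inl rfl))
  · rintro ⟨v, hv, ⟨f⟩⟩
    have h1 := f.card_edgeFinset_eq
    have h2 := G.card_edgeFinset_induce_compl_singleton v
    have h3 := G.card_edgeFinset_deleteIncidenceSet v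
    have h4 := G.degree_le_card_edgeFinset v
    rw [← h1]
    omega
end

section
/- Let r ≥ 3 and n ≥ 32. If G is an n-vertex K_{r+1}-free graph that is not Hamiltonian-connected, then e(G) ≤ e(T_r(n-1)) + 2, and equality holds if G is obtained from T_r(n-1) by adding a new vertex of degree 2 whose two neighbors are adjacent. -/
/-- Hamiltonian `u`-`w` path, as a list. -/
def HPath {V : Type} (G : SimpleGraph V) (u w : V) : Prop :=
  ∃ l : List V, l.IsChain G.Adj ∧ l.Nodup ∧ (∀ v, v ∈ l) ∧ l.head? = some u ∧ l.getLast? = some w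

open Classical in
noncomputable def dg {V : Type} [Fintype V] (G : SimpleGraph V) (x : V) : ℕ :=
  (Finset.univ.filter fun v => G.Adj x v).card

theorem HPath.walk {V : Type} [DecidableEq V] {G : SimpleGraph V} {u w : V} (h : HPath G u w) :
    ∃ p : G.Walk u w, p.IsHamiltonian := by
  obtain ⟨l, hc, hn, hm, hu, hw⟩ := h
  have hne : l ≠ [] := by rintro rfl; simp at hu
  have h1 : l.head hne = u := by
    rw [List.head?_eq_some_head hne] at hu; simpa using hu
  have h2 : l.getLast hne = w := by
    rw [List.getLast?_eq_some_getLast hne] at hw; simpa using hw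
  subst h1 h2
  refine ⟨SimpleGraph.Walk.ofSupport l hne hc, fun a => ?_⟩
  rw [SimpleGraph.Walk.support_ofSupport]
  exact List.count_eq_one_of_mem hn (hm a)

theorem hpath_top {V : Type} [Fintype V] (u w : V) (h : u ≠ w) : HPath (⊤ : SimpleGraph V) u w := by
  classical
  let m := ((Finset.univ.erase u).erase w).toList
  have hn : (u :: (m ++ [w])).Nodup := by
    simp only [List.nodup_cons, List.nodup_append, m]
    simp [h, Finset.nodup_toList]
    tauto
  refine ⟨u :: (m ++ [w]), ?_, hn, ?_, rfl, by
    rw [← List.cons_append]; exact List.getLast?_concat ..⟩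
  · apply List.Pairwise.isChain
    exact List.Pairwise.imp (fun {a b} (hab : a ≠ b) => (SimpleGraph.top_adj a b).2 hab) hn
  · intro v
    simp [m]; tauto

open Classical in
theorem count_lemma {V : Type} (P Q : V → Prop) : ∀ (l : List V) (a : V),
    (∀ A p q B, a :: l = A ++ p :: q :: B → P p → Q q → False) →
    (a :: l).countP (fun v => decide (P v)) + (a :: l).countP (fun v => decide (Q v)) ≤
      l.length + (if Q a then 1 else 0) + (if P ((a :: l).getLast (by simp)) then 1 else 0) := by
  intro l
  induction l with
  | nil => intro a _; by_cases hp : P a <;> by_cases hq : Q a <;> simp [hp, hq]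
  | cons b l ih =>
    intro a h
    have h1 := ih b (fun A p q B he => h (a :: A) p q B (by simp [he]))
    have h2 := h [] a b l rfl
    rw [List.countP_cons (a := a), List.countP_cons (a := a), List.getLast_cons (by simp)]
    simp only [decide_eq_true_eq, List.length_cons] at *
    by_cases hp : P a <;> by_cases hq : Q b <;> simp_all <;> omega

open Classical in
theorem dg_eq {V : Type} [Fintype V] (G : SimpleGraph V) (x : V) (l : List V) (hn : l.Nodup)
    (hm : ∀ v, v ∈ l) : dg G x = l.countP (fun v => decide (G.Adj x v)) := by
  rw [dg, List.countP_eq_length_filter, ← List.toFinset_card_of_nodup (hn.filter _)]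
  congr 1
  ext v; simp [hm]

/-- splitting a path of `G + xy` -/
theorem split_chain {V : Type} (G H : SimpleGraph V) (x y : V)
    (hH : ∀ a b, H.Adj a b → G.Adj a b ∨ (a = x ∧ b = y) ∨ (a = y ∧ b = x)) :
    ∀ l : List V, l.IsChain H.Adj → l.Nodup → ¬ l.IsChain G.Adj →
    ∃ A B a b, l = A ++ a :: b :: B ∧ ((a = x ∧ b = y) ∨ (a = y ∧ b = x)) ∧
      (A ++ [a]).IsChain G.Adj ∧ (b :: B).IsChain G.Adj := by
  intro l hc hn hg
  rw [List.isChain_iff_forall_rel_of_append_cons_cons] at hg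
  push Not at hg
  obtain ⟨a, b, A, B, rfl, hab⟩ := hg
  have hs : (a = x ∧ b = y) ∨ (a = y ∧ b = x) := by
    have := List.isChain_iff_forall_rel_of_append_cons_cons.1 hc (l₁ := A) (l₂ := B) rfl
    have := hH _ _ this
    tauto
  refine ⟨A, B, a, b, rfl, hs, ?_, ?_⟩
  · have h1 : (A ++ [a]).IsChain H.Adj := hc.prefix ⟨b :: B, by simp⟩
    refine List.IsChain.imp_of_mem_imp ?_ h1
    intro c d hc hd hcd
    have hbn : b ∉ A ++ [a] := by
      intro hb
      have : ((A ++ [a]) ++ b :: B).Nodup := by simpa using hn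
      exact (List.nodup_append.1 this).2.2 b hb b (by simp) rfl
    have h3 : c ≠ b := fun h => hbn (h ▸ hc)
    have h4 : d ≠ b := fun h => hbn (h ▸ hd)
    have h5 := hH _ _ hcd
    rcases hs with ⟨rfl, rfl⟩ | ⟨rfl, rfl⟩ <;> tauto
  · have h1 : (b :: B).IsChain H.Adj := hc.suffix ⟨A ++ [a], by simp⟩
    refine List.IsChain.imp_of_mem_imp ?_ h1
    intro c d hc hd hcd
    have hbn : a ∉ b :: B := by
      intro hb
      have : ((A ++ [a]) ++ b :: B).Nodup := by simpa using hn
      exact (List.nodup_append.1 this).2.2 a (by simp) a hb rfl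
    have h3 : c ≠ a := fun h => hbn (h ▸ hc)
    have h4 : d ≠ a := fun h => hbn (h ▸ hd)
    have h5 := hH _ _ hcd
    rcases hs with ⟨rfl, rfl⟩ | ⟨rfl, rfl⟩ <;> tauto

theorem chain_rev {V : Type} (G : SimpleGraph V) (l : List V) :
    l.reverse.IsChain G.Adj ↔ l.IsChain G.Adj := by
  rw [List.isChain_reverse]
  exact List.IsChain.iff (fun a b => G.adj_comm b a)

theorem ore_aux {V : Type} [Fintype V] (G : SimpleGraph V) (u w : V) (hno : ¬ HPath G u w)
    (A B : List V) (x y : V) (hn : (A ++ x :: y :: B).Nodup) (hm : ∀ v, v ∈ A ++ x :: y :: B)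
    (hu : (A ++ x :: y :: B).head? = some u) (hw : (A ++ x :: y :: B).getLast? = some w)
    (h1 : (A ++ [x]).IsChain G.Adj) (h2 : (y :: B).IsChain G.Adj) :
    dg G x + dg G y ≤ Fintype.card V := by
  classical
  have hlen : (A ++ x :: y :: B).length = Fintype.card V := by
    rw [← List.toFinset_card_of_nodup hn, ← Finset.card_univ]
    congr 1; ext v; simp only [List.mem_toFinset, Finset.mem_univ, iff_true]; exact hm v
  -- second part
  have c2 := count_lemma (fun v => G.Adj x v) (fun v => G.Adj y v) B y (by
    intro C p q D he hp hq
    apply hno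
    have hperm : ((A ++ [x]) ++ ((C ++ [p]).reverse ++ q :: D)).Perm (A ++ x :: y :: B) := by
      have : A ++ x :: y :: B = (A ++ [x]) ++ ((C ++ [p]) ++ q :: D) := by simp [he]
      rw [this]
      exact ((List.reverse_perm _).append_right _).append_left _
    have hCp : (C ++ [p]).IsChain G.Adj := h2.prefix ⟨q :: D, by simp [he]⟩
    have hqD : (q :: D).IsChain G.Adj := h2.suffix ⟨C ++ [p], by simp [he]⟩
    have hhead : (C ++ [p]).head? = some y := by
      have : (y :: B).head? = some y := rfl
      rw [he] at this
      cases C <;> simpa using this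
    refine ⟨(A ++ [x]) ++ ((C ++ [p]).reverse ++ q :: D), ?_, hperm.nodup_iff.2 hn,
      fun v => hperm.mem_iff.2 (hm v), ?_, ?_⟩
    · refine List.IsChain.append h1 (List.IsChain.append ((chain_rev _ _).2 hCp) hqD ?_) ?_
      · rw [List.getLast?_reverse, hhead]; simpa using hq
      · simpa using hp
    · rw [← hu]; cases A <;> simp
    · rw [← hw]
      have : A ++ x :: y :: B = (A ++ [x]) ++ ((C ++ [p]) ++ q :: D) := by simp [he]
      rw [this]
      rw [List.getLast?_append, List.getLast?_append, List.getLast?_append (l := A ++ [x]),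
        List.getLast?_append (l := C ++ [p])]
      simp [List.getLast?_cons])
  have c1 : (A ++ [x]).countP (fun v => decide (G.Adj x v)) +
      (A ++ [x]).countP (fun v => decide (G.Adj y v)) ≤ (A ++ [x]).length := by
    have key : ∀ C p q D, A ++ [x] = C ++ p :: q :: D → G.Adj x p → G.Adj y q → False := by
      intro C p q D he hp hq
      apply hno
      have heq : A ++ x :: y :: B = (C ++ [p]) ++ ((q :: D) ++ y :: B) := by
        have : A ++ x :: y :: B = (A ++ [x]) ++ y :: B := by simp
        rw [this, he]; simp
      have hperm : ((C ++ [p]) ++ ((q :: D).reverse ++ y :: B)).Perm (A ++ x :: y :: B) := by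
        rw [heq]
        exact ((List.reverse_perm _).append_right _).append_left _
      have hCp : (C ++ [p]).IsChain G.Adj := h1.prefix ⟨q :: D, by simp [he]⟩
      have hqD : (q :: D).IsChain G.Adj := h1.suffix ⟨C ++ [p], by simp [he]⟩
      have hlast : (q :: D).getLast? = some x := by
        have : (A ++ [x]).getLast? = some x := by simp
        rw [he] at this
        simpa [List.getLast?_append] using this
      refine ⟨(C ++ [p]) ++ ((q :: D).reverse ++ y :: B), ?_, hperm.nodup_iff.2 hn,
        fun v => hperm.mem_iff.2 (hm v), ?_, ?_⟩
      · refine List.IsChain.append hCp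
          (List.IsChain.append ((chain_rev _ _).2 hqD) h2 ?_) ?_
        · rw [List.getLast?_reverse]; simpa using hq.symm
        · rw [List.head?_append, List.head?_reverse, hlast]; simpa using hp.symm
      · rw [← hu, heq]; cases C <;> simp
      · rw [← hw, heq]
        rw [List.getLast?_append, List.getLast?_append, List.getLast?_append (l := C ++ [p]),
          List.getLast?_append (l := q :: D)]
        simp [List.getLast?_cons]
    rcases hA : A ++ [x] with _ | ⟨a, l⟩
    · simp at hA
    · have := count_lemma (fun v => G.Adj x v) (fun v => G.Adj y v) l a (by rwa [← hA])
      have hl : (a :: l).getLast (by simp) = x := by simp [← hA]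
      rw [hl] at this
      simp only [SimpleGraph.irrefl, if_false, List.length_cons] at *
      split_ifs at this <;> omega
  have e : A ++ x :: y :: B = (A ++ [x]) ++ y :: B := by simp
  rw [dg_eq G x _ hn hm, dg_eq G y _ hn hm, e, List.countP_append (l₁ := A ++ [x]),
    List.countP_append (l₁ := A ++ [x]), ← hlen, e,
    List.length_append]
  simp only [SimpleGraph.irrefl, if_false, List.length_cons] at *
  split_ifs at c2 <;> omega

theorem posa {V : Type} [Fintype V] (G : SimpleGraph V) (u w : V) (huw : u ≠ w)
    (hno : ¬ HPath G u w) (hcard : 4 ≤ Fintype.card V) :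
    ∃ i, 2 ≤ i ∧ 2 * i ≤ Fintype.card V ∧ ∃ K : Finset V, i - 1 ≤ K.card ∧ ∀ v ∈ K, dg G v ≤ i := by
  classical
  obtain ⟨H, hGH, hmax⟩ := Set.Finite.exists_le_maximal
    (s := {H : SimpleGraph V | ¬ HPath H u w}) (Set.toFinite _) (a := G) hno
  have hdg : ∀ v, dg G v ≤ dg H v := fun v => Finset.card_le_card (by
    intro a; simp only [Finset.mem_filter, Finset.mem_univ, true_and]; exact fun h => hGH h)
  have hHno : ¬ HPath H u w := hmax.1
  have ore : ∀ x y, x ≠ y → ¬ H.Adj x y → dg H x + dg H y ≤ Fintype.card V := by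
    intro x y hxy hadj
    have : HPath (H ⊔ SimpleGraph.edge x y) u w := by
      by_contra hc
      have := hmax.2 (y := H ⊔ SimpleGraph.edge x y) hc le_sup_left
      exact hadj (this (by simp [SimpleGraph.edge_adj, hxy]))
    obtain ⟨l, hc, hn, hm, hu, hw⟩ := this
    have hl : ¬ l.IsChain H.Adj := fun h => hHno ⟨l, h, hn, hm, hu, hw⟩
    obtain ⟨A, B, a, b, rfl, hs, h1, h2⟩ := split_chain H _ x y (by
      intro a b; simp only [SimpleGraph.sup_adj, SimpleGraph.edge_adj]; tauto) l hc hn hl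
    have := ore_aux H u w hHno A B a b hn hm hu hw h1 h2
    rcases hs with ⟨rfl, rfl⟩ | ⟨rfl, rfl⟩ <;> omega
  have hne : ∃ p : V × V, p.1 ≠ p.2 ∧ ¬ H.Adj p.1 p.2 := by
    by_contra hc
    push Not at hc
    apply hHno
    have : H = ⊤ := by
      ext a b
      simp only [SimpleGraph.top_adj]
      exact ⟨fun h => h.ne, fun h => hc (a, b) h⟩
    rw [this]; exact hpath_top u w huw
  obtain ⟨⟨x, y⟩, ⟨hxy, hadj⟩, hbest⟩ := Set.exists_max_image
    {p : V × V | p.1 ≠ p.2 ∧ ¬ H.Adj p.1 p.2} (fun p => dg H p.1 + dg H p.2) (Set.toFinite _) hne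
  wlog hle : dg H x ≤ dg H y generalizing x y
  · refine this y x ?_ (Ne.symm hxy) (fun h => hadj (SimpleGraph.Adj.symm h)) (by omega)
    intro p hp
    have := hbest p hp
    simp only at *
    omega
  have hsum := ore x y hxy hadj
  by_cases h2 : dg H x < 2
  · refine ⟨2, le_rfl, by omega, {x}, by simp, ?_⟩
    intro v hv
    obtain rfl := Finset.mem_singleton.1 hv
    have := hdg v
    omega
  · refine ⟨dg H x, by omega, by omega, Finset.univ.filter (fun v => v ≠ y ∧ ¬ H.Adj y v), ?_, ?_⟩
    · have h3 : Finset.univ.filter (fun v => v ≠ y ∧ ¬ H.Adj y v) =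
          (Finset.univ.filter (fun v => ¬ H.Adj y v)).erase y := by
        ext v; simp
      have h4 := Finset.card_filter_add_card_filter_not (s := (Finset.univ : Finset V))
        (fun v => H.Adj y v)
      rw [h3, Finset.card_erase_of_mem (by simp)]
      rw [Finset.card_univ] at h4
      unfold dg at *
      omega
    · intro v hv
      simp only [Finset.mem_filter, Finset.mem_univ, true_and] at hv
      have := hbest (v, y) ⟨hv.1, fun h => hv.2 h.symm⟩
      have := hdg v
      simp only at *
      omega

theorem turan_step (r : ℕ) (hr : 0 < r) (m : ℕ) :
    (SimpleGraph.turanGraph (m + 1) r).edgeFinset.card + m / r =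
      (SimpleGraph.turanGraph m r).edgeFinset.card + m := by
  induction m using Nat.strong_induction_on with
  | _ m ih =>
    rcases lt_or_ge m r with h | h
    · have e1 := SimpleGraph.card_edgeFinset_turanGraph (n := m) (r := r)
      have e2 := SimpleGraph.card_edgeFinset_turanGraph (n := m + 1) (r := r)
      rw [Nat.mod_eq_of_lt h, Nat.sub_self, Nat.zero_mul, Nat.zero_div] at e1
      rw [Nat.div_eq_of_lt h, e1]
      have e3 : (SimpleGraph.turanGraph (m + 1) r).edgeFinset.card = (m + 1).choose 2 := by
        have : SimpleGraph.turanGraph (m + 1) r = ⊤ :=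
          SimpleGraph.turanGraph_eq_top.2 (Or.inr h)
        have h6 := SimpleGraph.card_edgeFinset_top_eq_card_choose_two (V := Fin (m + 1))
        rw [Fintype.card_fin] at h6
        rw [← h6]
        congr!
      rw [e3, Nat.choose_succ_succ' m 1, Nat.choose_one_right]
      simp only [Nat.reduceAdd]
      omega
    · obtain ⟨k, rfl⟩ := Nat.exists_eq_add_of_le' h
      have h1 := ih k (by omega)
      have a1 := SimpleGraph.card_edgeFinset_turanGraph_add (n := k) (r := r)
      have a2 := SimpleGraph.card_edgeFinset_turanGraph_add (n := k + 1) (r := r)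
      rw [show k + 1 + r = k + r + 1 by ring] at a2
      rw [a1, a2, Nat.add_div_right _ hr, Nat.add_mul]
      omega

theorem turan_bound {V : Type} [Fintype V] [DecidableEq V] (G : SimpleGraph V)
    [DecidableRel G.Adj] (r : ℕ) (hfree : G.CliqueFree (r + 1)) :
    G.edgeFinset.card ≤ (SimpleGraph.turanGraph (Fintype.card V) r).edgeFinset.card := by
  rw [SimpleGraph.card_edgeFinset_turanGraph]
  exact hfree.card_edgeFinset_le

theorem delete_bound {V : Type} [Fintype V] [DecidableEq V] (G : SimpleGraph V)
    [DecidableRel G.Adj] (r i : ℕ) (hfree : G.CliqueFree (r + 1)) (K : Finset V)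
    (hK : ∀ v ∈ K, G.degree v ≤ i) :
    G.edgeFinset.card ≤
      (SimpleGraph.turanGraph (Fintype.card V - K.card) r).edgeFinset.card + K.card * i := by
  have hc : Fintype.card {v // v ∉ K} = Fintype.card V - K.card := by
    rw [Fintype.card_subtype_compl]; simp
  let G' : SimpleGraph {v // v ∉ K} := G.comap (Function.Embedding.subtype _)
  have hf' : G'.CliqueFree (r + 1) := hfree.comap (SimpleGraph.Embedding.comap _ G).isContained
  have hb := turan_bound G' r hf'
  rw [hc] at hb
  have hsub : G.edgeFinset ⊆
      (G'.edgeFinset.map (Function.Embedding.subtype (· ∉ K)).sym2Map) ∪ K.biUnion (fun v => G.incidenceFinset v) := by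
    intro e he
    induction e using Sym2.ind with
    | _ a b =>
      rw [SimpleGraph.mem_edgeFinset, SimpleGraph.mem_edgeSet] at he
      by_cases ha : a ∈ K
      · refine Finset.mem_union_right _ (Finset.mem_biUnion.2 ⟨a, ha, ?_⟩)
        simp [SimpleGraph.mem_incidenceFinset, SimpleGraph.incidenceSet, he]
      by_cases hb : b ∈ K
      · refine Finset.mem_union_right _ (Finset.mem_biUnion.2 ⟨b, hb, ?_⟩)
        simp [SimpleGraph.mem_incidenceFinset, SimpleGraph.incidenceSet, he]
      refine Finset.mem_union_left _ (Finset.mem_map.2 ⟨s(⟨a, ha⟩, ⟨b, hb⟩), ?_, by simp⟩)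
      rw [SimpleGraph.mem_edgeFinset, SimpleGraph.mem_edgeSet]
      exact he
  have h1 := (Finset.card_le_card hsub).trans (Finset.card_union_le _ _)
  rw [Finset.card_map] at h1
  have h2 : (K.biUnion (fun v => G.incidenceFinset v)).card ≤ K.card * i := by
    apply Finset.card_biUnion_le_card_mul
    intro v hv; rw [SimpleGraph.card_incidenceFinset_eq_degree]; exact hK v hv
  omega

theorem numeric (t : ℕ → ℕ) (n i r : ℕ) (hr : 3 ≤ r) (hn : 32 ≤ n) (hi : 2 ≤ i) (hin : 2 * i ≤ n)
    (ht : ∀ m, t (m + 1) + m / r = t m + m) :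
    ∃ k, k ≤ i - 1 ∧ t (n - k) + k * i ≤ t (n - 1) + 2 := by
  have ht' : ∀ m, t m + m ≤ t (m + 1) + m / 3 := fun m => by
    have := ht m
    have := Nat.div_le_div_left (a := m) hr (by norm_num)
    omega
  obtain ⟨m, rfl⟩ := Nat.exists_eq_add_of_le' (show 8 ≤ n by omega)
  have h0 := ht' m
  have h1 := ht' (m + 1)
  have h2 := ht' (m + 2)
  have h3 := ht' (m + 3)
  have h4 := ht' (m + 4)
  have h5 := ht' (m + 5)
  have h6 := ht' (m + 6)
  simp only [Nat.add_assoc, Nat.reduceAdd] at *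
  by_cases h : i ≤ 8
  · refine ⟨i - 1, le_rfl, ?_⟩
    interval_cases i <;> simp only [Nat.reduceSub, Nat.reduceSubDiff, Nat.add_one_sub_one] <;> omega
  · refine ⟨8, by omega, ?_⟩
    simp only [Nat.add_sub_cancel, Nat.reduceSubDiff]
    omega


/-- Theorem 5.5 (r ≥ 3, n ≥ 32): an `n`-vertex `K_{r+1}`-free graph that is not
Hamiltonian-connected has at most `e(T_r(n-1)) + 2` edges, with equality if `G` is the
Turán graph `T_r(n-1)` plus a new vertex of degree 2 whose two neighbors are adjacent. -/
theorem cliqueFree_not_hamiltonianConnected_edge_bound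
    {V : Type} [Fintype V] [DecidableEq V]
    (G : SimpleGraph V) [DecidableRel G.Adj] (n r : ℕ)
    (hr : 3 ≤ r) (hn : 32 ≤ n) (hcard : Fintype.card V = n)
    (hfree : G.CliqueFree (r + 1))
    (hnhc : ¬ ∀ u w : V, u ≠ w → ∃ p : G.Walk u w, p.IsHamiltonian) :
    G.edgeFinset.card ≤ (SimpleGraph.turanGraph (n - 1) r).edgeFinset.card + 2 ∧
    ((∃ (v a b : V), a ≠ b ∧ G.neighborFinset v = {a, b} ∧ G.Adj a b ∧
        Nonempty ((G.induce ({v}ᶜ : Set V)) ≃g SimpleGraph.turanGraph (n - 1) r)) →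
      G.edgeFinset.card = (SimpleGraph.turanGraph (n - 1) r).edgeFinset.card + 2) := by
  constructor
  · push Not at hnhc
    obtain ⟨u, w, huw, hno⟩ := hnhc
    have hno' : ¬ HPath G u w := fun h => by
      obtain ⟨p, hp⟩ := h.walk
      exact hno p hp
    obtain ⟨i, hi, hin, K, hK, hdeg⟩ := posa G u w huw hno' (by omega)
    rw [hcard] at hin
    obtain ⟨k, hk, hb⟩ := numeric (fun m => (SimpleGraph.turanGraph m r).edgeFinset.card) n i r hr
      hn hi hin (turan_step r (by omega))
    obtain ⟨K', hK', rfl⟩ := Finset.exists_subset_card_eq (hk.trans hK)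
    have := delete_bound G r i hfree K' (by
      intro v hv
      have := hdeg v (hK' hv)
      rw [dg] at this
      rw [← SimpleGraph.card_neighborFinset_eq_degree, SimpleGraph.neighborFinset_eq_filter]
      convert this)
    rw [hcard] at this
    exact this.trans hb
  · rintro ⟨v, a, b, hab, hN, -, ⟨f⟩⟩
    have h1 := G.card_edgeFinset_induce_compl_singleton v
    have h2 := G.card_edgeFinset_deleteIncidenceSet v
    have h3 := f.card_edgeFinset_eq
    have h4 : G.degree v = 2 := by
      rw [← SimpleGraph.card_neighborFinset_eq_degree, hN, Finset.card_pair hab]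
    have h5 := G.degree_le_card_edgeFinset v
    omega
end

section
/- Let t ≥ 2 and n ≥ 2. If G is an n-vertex graph that is not traceable, then the number of t-cliques of G is at most C(n-1, t) (the number of t-cliques of K_{n-1}), with equality if G is the disjoint union of K_{n-1} and an isolated vertex. -/
open Finset in
theorem ntc_insert_tail {V : Type} (G : SimpleGraph V) [DecidableRel G.Adj] (v : V) :
    ∀ (k : ℕ) (a : V) (l : List V), l.length ≤ k → (a :: l).IsChain G.Adj →
      2 * (a :: l).countP (fun x => !decide (G.Adj v x)) < (a :: l).length →
      ∃ l' : List V, (a :: l').IsChain G.Adj ∧ l'.Perm (v :: l) := by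
  intro k
  induction k with
  | zero =>
    intro a l hl hc hb
    have : l = [] := List.length_eq_zero_iff.1 (by omega)
    subst this
    by_cases h : G.Adj v a
    · exact ⟨[v], by simpa using h.symm, List.Perm.refl _⟩
    · simp [h] at hb
  | succ k ih =>
    intro a l hl hc hb
    by_cases h : G.Adj v a
    · cases l with
      | nil => exact ⟨[v], by simpa using h.symm, List.Perm.refl _⟩
      | cons c l2 =>
        by_cases h2 : G.Adj v c
        · refine ⟨v :: c :: l2, ?_, List.Perm.refl _⟩
          simp only [List.isChain_cons_cons] at hc ⊢
          exact ⟨h.symm, h2, hc.2⟩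
        · cases l2 with
          | nil => simp [h, h2] at hb
          | cons d l3 =>
            simp only [List.isChain_cons_cons] at hc
            obtain ⟨l', h1, h3⟩ := ih d l3 (by simp at hl; omega) hc.2.2 (by
              rw [List.countP_cons, List.countP_cons] at hb
              simp only [h, h2, List.length_cons] at hb ⊢
              simp at hb
              omega)
            refine ⟨c :: d :: l', ?_, ?_⟩
            · simp only [List.isChain_cons_cons]
              exact ⟨hc.1, hc.2.1, h1⟩
            · have := (h3.cons d).cons c
              refine this.trans ?_
              refine ((List.Perm.swap v d l3).cons c).trans ?_
              exact List.Perm.swap v c _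
    · cases l with
      | nil => simp [h] at hb
      | cons c l2 =>
        simp only [List.isChain_cons_cons] at hc
        obtain ⟨l', h1, h3⟩ := ih c l2 (by simp at hl; omega) hc.2 (by
          rw [List.countP_cons] at hb
          simp only [h, List.length_cons] at hb ⊢
          simp at hb
          omega)
        refine ⟨c :: l', ?_, ?_⟩
        · simp only [List.isChain_cons_cons]
          exact ⟨hc.1, h1⟩
        · exact (h3.cons c).trans (List.Perm.swap v c _)

theorem ntc_insert {V : Type} (G : SimpleGraph V) [DecidableRel G.Adj] (v : V)
    (l : List V) (hc : l.IsChain G.Adj)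
    (hb : 2 * l.countP (fun x => !decide (G.Adj v x)) ≤ l.length) :
    ∃ l' : List V, l'.IsChain G.Adj ∧ l'.Perm (v :: l) := by
  cases l with
  | nil => exact ⟨[v], by simp, List.Perm.refl _⟩
  | cons a l =>
    by_cases h : G.Adj v a
    · exact ⟨v :: a :: l, by rw [List.isChain_cons_cons]; exact ⟨h, hc⟩, List.Perm.refl _⟩
    · cases l with
      | nil => simp [h] at hb
      | cons c l2 =>
        rw [List.isChain_cons_cons] at hc
        obtain ⟨l', h1, h3⟩ := ntc_insert_tail G v _ c l2 le_rfl hc.2 (by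
          rw [List.countP_cons] at hb
          simp only [h, List.length_cons] at hb ⊢
          simp at hb
          omega)
        refine ⟨a :: c :: l', ?_, ?_⟩
        · rw [List.isChain_cons_cons]
          exact ⟨hc.1, h1⟩
        · refine ((h3.cons c).cons a).trans ?_
          refine ((List.Perm.swap v c l2).cons a).trans ?_
          exact List.Perm.swap v a _

/-- Twice the number of edges of `H` inside `S`. -/
def ntcE {V : Type} [DecidableEq V] (H : SimpleGraph V) [DecidableRel H.Adj]
    (S : Finset V) : ℕ := ∑ x ∈ S, (S.filter (H.Adj x)).card

theorem ntcE_erase {V : Type} [DecidableEq V] (H : SimpleGraph V) [DecidableRel H.Adj]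
    (S : Finset V) (v : V) (hv : v ∈ S) :
    ntcE H S = ntcE H (S.erase v) + 2 * ((S.erase v).filter (H.Adj v)).card := by
  obtain ⟨T, hT, rfl⟩ : ∃ T, v ∉ T ∧ insert v T = S := ⟨S.erase v, by simp, by simp [hv]⟩
  rw [Finset.erase_insert hT]
  unfold ntcE
  rw [Finset.sum_insert hT]
  have h1 : ((insert v T).filter (H.Adj v)) = T.filter (H.Adj v) := by
    rw [Finset.filter_insert]; simp
  have h2 : ∀ x ∈ T, ((insert v T).filter (H.Adj x)).card
      = (T.filter (H.Adj x)).card + if H.Adj v x then 1 else 0 := by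
    intro x hx
    rw [Finset.filter_insert]
    by_cases h : H.Adj v x
    · rw [if_pos h.symm, if_pos h, Finset.card_insert_of_notMem (by simp [hT])]
    · rw [if_neg (fun h' => h h'.symm), if_neg h, add_zero]
  rw [h1, Finset.sum_congr rfl h2, Finset.sum_add_distrib, ← Finset.card_filter]
  ring

theorem ntc_list {V : Type} [DecidableEq V] (G : SimpleGraph V) [DecidableRel G.Adj] :
    ∀ (k : ℕ) (S : Finset V), S.card = k → ntcE Gᶜ S + 4 ≤ 2 * S.card →
      ∃ l : List V, l.IsChain G.Adj ∧ l.Nodup ∧ l.toFinset = S := by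
  intro k
  induction k with
  | zero => intro S hS h; omega
  | succ k ih =>
    intro S hS h
    by_cases hne : ∃ u ∈ S, ∃ v ∈ S, Gᶜ.Adj u v
    · have key : ∃ u ∈ S, ∃ v ∈ S, Gᶜ.Adj u v ∧
          (S.filter (Gᶜ.Adj v)).card ≤ (S.filter (Gᶜ.Adj u)).card := by
        obtain ⟨u, hu, v, hv, huv⟩ := hne
        rcases le_total (S.filter (Gᶜ.Adj v)).card (S.filter (Gᶜ.Adj u)).card with h' | h'
        · exact ⟨u, hu, v, hv, huv, h'⟩
        · exact ⟨v, hv, u, hu, huv.symm, h'⟩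
      obtain ⟨u, hu, v, hv, huv, hle⟩ := key
      have hcard := Finset.card_erase_of_mem hv
      have e1 := ntcE_erase Gᶜ S v hv
      have hu' : u ∈ S.erase v := Finset.mem_erase.2 ⟨huv.ne, hu⟩
      have e2 := ntcE_erase Gᶜ (S.erase v) u hu'
      have d1 : (S.erase v).filter (Gᶜ.Adj v) = S.filter (Gᶜ.Adj v) := by
        ext x; simp only [Finset.mem_filter, Finset.mem_erase]
        exact ⟨fun h => ⟨h.1.2, h.2⟩, fun h => ⟨⟨h.2.ne', h.1⟩, h.2⟩⟩
      have d2 : ((S.erase v).erase u).filter (Gᶜ.Adj u) = (S.filter (Gᶜ.Adj u)).erase v := by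
        ext x; simp only [Finset.mem_filter, Finset.mem_erase]
        exact ⟨fun h => ⟨h.1.2.1, h.1.2.2, h.2⟩, fun h => ⟨⟨h.2.2.ne', h.1, h.2.1⟩, h.2.2⟩⟩
      have hvm : v ∈ S.filter (Gᶜ.Adj u) := Finset.mem_filter.2 ⟨hv, huv⟩
      have hum : u ∈ S.filter (Gᶜ.Adj v) := Finset.mem_filter.2 ⟨hu, huv.symm⟩
      have d3 := Finset.card_erase_of_mem hvm
      have p1 := Finset.card_pos.2 ⟨v, hvm⟩
      have p2 := Finset.card_pos.2 ⟨u, hum⟩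
      rw [d2, d3] at e2
      rw [d1] at e1
      obtain ⟨l, hc, hn, hl⟩ := ih (S.erase v) (by omega) (by omega)
      have hlen : l.length = (S.erase v).card := by
        rw [← hl, List.toFinset_card_of_nodup hn]
      have hcount : l.countP (fun x => !decide (G.Adj v x)) = (S.filter (Gᶜ.Adj v)).card := by
        rw [← d1, ← hl, List.countP_eq_length_filter,
          ← List.toFinset_card_of_nodup (hn.filter _)]
        congr 1
        ext x
        have : x ∈ l → v ≠ x := by
          rintro hx rfl
          have : v ∈ S.erase v := by rw [← hl]; simpa using hx
          simp at this
        simp only [List.mem_toFinset, List.mem_filter, Finset.mem_filter,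
          SimpleGraph.compl_adj]
        simp
        tauto
      obtain ⟨l', hc', hp⟩ := ntc_insert G v l hc (by omega)
      refine ⟨l', hc', ?_, ?_⟩
      · rw [hp.nodup_iff, List.nodup_cons]
        refine ⟨?_, hn⟩
        rw [← List.mem_toFinset, hl]; simp
      · rw [List.toFinset_eq_of_perm _ _ hp, List.toFinset_cons, hl, Finset.insert_erase hv]
    · refine ⟨S.toList, ?_, S.nodup_toList, S.toList_toFinset⟩
      apply List.Pairwise.isChain
      refine List.Pairwise.imp_of_mem ?_ S.nodup_toList
      intro a b ha hb hab
      by_contra hadj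
      exact hne ⟨a, by simpa using ha, b, by simpa using hb, by simp [hab, hadj]⟩

theorem ntc_edges {V : Type} [Fintype V] [DecidableEq V]
    (G : SimpleGraph V) [DecidableRel G.Adj] (hn : 2 ≤ Fintype.card V)
    (hnt : ¬ ∃ (u w : V) (p : G.Walk u w), p.IsHamiltonian) :
    Fintype.card V ≤ (Gᶜ).edgeFinset.card + 1 := by
  by_contra hcon
  have hE : ntcE Gᶜ Finset.univ = 2 * (Gᶜ).edgeFinset.card := by
    rw [← SimpleGraph.sum_degrees_eq_twice_card_edges]
    unfold ntcE
    refine Finset.sum_congr rfl fun x _ => ?_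
    rw [← SimpleGraph.card_neighborFinset_eq_degree, SimpleGraph.neighborFinset_eq_filter]
  obtain ⟨l, hc, hnd, hl⟩ := ntc_list G _ Finset.univ rfl (by rw [hE, Finset.card_univ]; omega)
  have hne : l ≠ [] := by
    rintro rfl
    have := congrArg Finset.card hl
    simp at this
    omega
  refine hnt ⟨_, _, SimpleGraph.Walk.ofSupport l hne hc, ?_⟩
  intro a
  rw [SimpleGraph.Walk.support_ofSupport]
  refine List.count_eq_one_of_mem hnd ?_
  rw [← List.mem_toFinset, hl]; simp

open Finset FinsetFamily in
theorem ntc_kk (m s : ℕ) (G : SimpleGraph (Fin (m + 2))) [DecidableRel G.Adj]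
    (hE : m + 1 ≤ (Gᶜ).edgeFinset.card) (hs : s ≤ m) :
    (G.cliqueFinset (s + 2)).card ≤ (m + 1).choose (s + 2) := by
  classical
  set A : Finset (Finset (Fin (m + 2))) := (Gᶜ).edgeFinset.image (fun e => (e.toFinset)ᶜ) with hA
  have hAc : A.card = (Gᶜ).edgeFinset.card := by
    apply Finset.card_image_of_injective
    intro e f hef
    have := compl_injective hef
    apply Sym2.ext
    intro x
    rw [← Sym2.mem_toFinset, ← Sym2.mem_toFinset, this]
  have hsz : (A : Set (Finset (Fin (m + 2)))).Sized m := by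
    intro x hx
    simp only [hA, Finset.coe_image, Set.mem_image, Finset.mem_coe] at hx
    obtain ⟨e, he, rfl⟩ := hx
    rw [Finset.card_compl, Sym2.card_toFinset_of_not_isDiag _
      (SimpleGraph.not_isDiag_of_mem_edgeFinset he)]
    simp
  have hkk := kruskal_katona_lovasz_form (i := s) (r := m) (k := m + 1) (n := m + 2)
    hs (by omega) (by omega) hsz (by simp [hAc]; exact hE)
  have hsym : (m + 1).choose (m - s) = (m + 1).choose (s + 1) :=
    Nat.choose_symm_of_eq_add (by omega)
  rw [hsym] at hkk
  have hdisj : Disjoint (G.cliqueFinset (s + 2)) ((∂^[s] A).image compl) := by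
    rw [Finset.disjoint_left]
    intro x hx hx'
    rw [Finset.mem_image] at hx'
    obtain ⟨y, hy, rfl⟩ := hx'
    obtain ⟨b, hb, hyb, -⟩ := mem_shadow_iterate_iff_exists_mem_card_add.1 hy
    rw [hA, Finset.mem_image] at hb
    obtain ⟨e, he, rfl⟩ := hb
    induction e using Sym2.ind with
    | _ u v =>
      rw [SimpleGraph.mem_edgeFinset, SimpleGraph.mem_edgeSet, SimpleGraph.compl_adj] at he
      have hsub : ∀ z ∈ s(u, v), z ∈ yᶜ := by
        intro z hz
        rw [Finset.mem_compl]
        intro hzy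
        have := hyb hzy
        rw [Finset.mem_compl, Sym2.mem_toFinset] at this
        exact this hz
      have hcl := (SimpleGraph.mem_cliqueFinset_iff.1 hx).isClique
      exact he.2 (hcl (hsub u (by simp)) (hsub v (by simp)) he.1)
  have hsubset : G.cliqueFinset (s + 2) ∪ (∂^[s] A).image compl ⊆
      powersetCard (s + 2) univ := by
    apply Finset.union_subset
    · intro x hx
      rw [Finset.mem_powersetCard]
      exact ⟨subset_univ _, (SimpleGraph.mem_cliqueFinset_iff.1 hx).card_eq⟩
    · intro x hx
      rw [Finset.mem_image] at hx
      obtain ⟨y, hy, rfl⟩ := hx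
      have := hsz.shadow_iterate hy
      rw [Finset.mem_powersetCard, Finset.card_compl, this, Fintype.card_fin]
      exact ⟨subset_univ _, by omega⟩
  have hcard := Finset.card_le_card hsubset
  rw [Finset.card_union_of_disjoint hdisj, Finset.card_image_of_injective _ compl_injective,
    Finset.card_powersetCard, Finset.card_univ, Fintype.card_fin,
    Nat.choose_succ_succ (m + 1) (s + 1)] at hcard
  have hsucc : (m + 1).choose (s + 1).succ = (m + 1).choose (s + 2) := rfl
  omega


/-- Corollary 7.4(1): for `t ≥ 2` and `n ≥ 2`, an `n`-vertex graph that is not traceable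
has at most `C(n-1,t)` `t`-cliques (the number of `t`-cliques of `K_{n-1}`), with
equality if `G` is `K_{n-1}` plus an isolated vertex. -/
theorem not_traceable_clique_bound
    {V : Type} [Fintype V] [DecidableEq V]
    (G : SimpleGraph V) [DecidableRel G.Adj] (n t : ℕ)
    (ht : 2 ≤ t) (hn : 2 ≤ n) (hcard : Fintype.card V = n)
    (hnt : ¬ ∃ (u w : V) (p : G.Walk u w), p.IsHamiltonian) :
    (G.cliqueFinset t).card ≤ (n - 1).choose t ∧
    ((∃ v : V, G.degree v = 0 ∧
        Nonempty ((G.induce ({v}ᶜ : Set V)) ≃g (⊤ : SimpleGraph (Fin (n - 1))))) →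
      (G.cliqueFinset t).card = (n - 1).choose t) := by
  have hmain : (G.cliqueFinset t).card ≤ (n - 1).choose t := by
    by_cases htn : n < t
    · have := G.card_cliqueFinset_le (n := t)
      rw [hcard, Nat.choose_eq_zero_of_lt htn] at this
      omega
    · obtain ⟨m, rfl⟩ : ∃ m, n = m + 2 := ⟨n - 2, by omega⟩
      obtain ⟨s, rfl⟩ : ∃ s, t = s + 2 := ⟨t - 2, by omega⟩
      classical
      have hE := ntc_edges G (by omega) hnt
      let e : V ≃ Fin (m + 2) := Fintype.equivFinOfCardEq hcard
      let f : G ≃g G.map e := SimpleGraph.Iso.map e G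
      have f' : Gᶜ ≃g (G.map e)ᶜ :=
        ⟨e, by
          intro a b
          rw [SimpleGraph.compl_adj, SimpleGraph.compl_adj]
          have := f.map_adj_iff (v := a) (w := b)
          change (G.map e).Adj (e a) (e b) ↔ _ at this
          rw [this, e.injective.ne_iff]⟩
      have h := ntc_kk m s (G.map e) (by
        rw [← f'.card_edgeFinset_eq]; omega) (by omega)
      have hc : ((G.map e).cliqueFinset (s + 2)).card = (G.cliqueFinset (s + 2)).card := by
        rw [SimpleGraph.cliqueFinset_map_of_equiv, Finset.card_map]
      rw [hc] at h
      exact h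
  refine ⟨hmain, ?_⟩
  rintro ⟨v, -, ⟨f⟩⟩
  refine le_antisymm hmain ?_
  have hc : ((Finset.univ.erase v).powersetCard t).card = (n - 1).choose t := by
    rw [Finset.card_powersetCard, Finset.card_erase_of_mem (Finset.mem_univ v),
      Finset.card_univ, hcard]
  rw [← hc]
  refine Finset.card_le_card fun x hx => ?_
  rw [Finset.mem_powersetCard] at hx
  rw [SimpleGraph.mem_cliqueFinset_iff, SimpleGraph.isNClique_iff]
  refine ⟨?_, hx.2⟩
  intro a ha b hb hab
  have ha' : a ∈ ({v}ᶜ : Set V) := by simpa using hx.1 ha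
  have hb' : b ∈ ({v}ᶜ : Set V) := by simpa using hx.1 hb
  have := f.map_adj_iff (v := ⟨a, ha'⟩) (w := ⟨b, hb'⟩)
  have h2 : (G.induce ({v}ᶜ : Set V)).Adj ⟨a, ha'⟩ ⟨b, hb'⟩ := by
    rw [← this, SimpleGraph.top_adj, f.injective.ne_iff]
    simpa using hab
  simpa using h2
end
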